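/- Let ℓ ≥ 2, let G be a K_ℓ-critical graph with χ(G) = k, and let x be a vertex of G such that there is a copy L_0 of K_ℓ in G with V(L_0) ⊄ N[x]. Then the subgraph of G induced by the neighborhood N(x) satisfies χ(G[N(x)]) ≤ k − ℓ − 1. -/

import Mathlib

/-!
Some vertex `y` of `L₀` is neither `x` nor a neighbor of `x`. If a copy `L ∋ y` of `K_ℓ` misses
`N(x)`, then `G - L` has a `(k - ℓ)`-coloring, and `N(x)` avoids the color of `x` in it, so `N(x)`
is `(k - ℓ - 1)`-colorable.

Otherwise `L` can be exchanged for a copy with fewer vertices in `N(x)`. Given a `(k - ℓ)`-coloring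
of `G - L`, the color class of `x` contains a vertex `z` adjacent to all of `L`
(`exists_common_neighbor`): if not, each vertex of this class could share a color with a nonneighbor
in `L`, saving one of the `k` colors. As `x` is not adjacent to `y`, `z ≠ x`, and `z` is not adjacent
to `x`, having the same color. Hence replacing a vertex of `L ∩ N(x)` by `z` gives a copy of `K_ℓ`
through `y` meeting `N(x)` in fewer vertices.
-/

open SimpleGraph

/-- A graph `G` is `K_ℓ`-critical if it contains `K_ℓ` as a subgraph, deleting any vertex
drops the chromatic number by one, and deleting the vertex set of any copy of `K_ℓ`
drops the chromatic number by `ℓ`. -/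
def IsKCritical {V : Type*} (G : SimpleGraph V) (ℓ : ℕ) : Prop :=
  (∃ s : Finset V, G.IsNClique ℓ s) ∧
  (∀ v : V, (G.induce ({v}ᶜ : Set V)).chromaticNumber + 1 = G.chromaticNumber) ∧
  (∀ s : Finset V, G.IsNClique ℓ s →
    (G.induce ((↑s : Set V)ᶜ)).chromaticNumber + (ℓ : ℕ∞) = G.chromaticNumber)

/-- If `G - L` is properly colored by `m` colors and `G` is not `(m - 1 + |L|)`-colorable, then
every color class met by some vertex `x` contains a common neighbor of `L`. -/
lemma exists_common_neighbor {V : Type*} (G : SimpleGraph V) (L : Finset V) (m : ℕ)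
    (c : (G.induce ((↑L : Set V)ᶜ)).Coloring (Fin m)) (x : ((↑L : Set V)ᶜ : Set V))
    (hG : ¬ G.Colorable (m - 1 + L.card)) :
    ∃ z : ((↑L : Set V)ᶜ : Set V), c z = c x ∧ ∀ v ∈ L, G.Adj z v := by
  classical
  by_contra! hcon
  apply hG
  -- `f z` is a nonneighbor of `z` in `L`, whose color `z` will take over.
  choose f hfL hf using hcon
  let col : V → {i : Fin m // i ≠ c x} ⊕ L := fun v =>
    if hv : v ∈ L then Sum.inr ⟨v, hv⟩
    else if h : c ⟨v, by simpa using hv⟩ = c x then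
      Sum.inr ⟨f ⟨v, by simpa using hv⟩ h, hfL _ h⟩
    else Sum.inl ⟨c ⟨v, by simpa using hv⟩, h⟩
  have key : ∀ {a b : V}, G.Adj a b → col a ≠ col b := by
    intro a b hab heq
    have hc : ∀ (ha : a ∈ ((↑L : Set V)ᶜ)) (hb : b ∈ ((↑L : Set V)ᶜ)),
        c ⟨a, ha⟩ ≠ c ⟨b, hb⟩ := fun ha hb => c.valid (by simpa using hab)
    simp only [col] at heq
    split_ifs at heq with h1 h2 h3 h4 h5 h6 h7
    · simp only [Sum.inr.injEq, Subtype.mk.injEq] at heq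
      exact G.ne_of_adj hab heq
    · simp only [Sum.inr.injEq, Subtype.mk.injEq] at heq
      exact hf _ h3 (heq ▸ hab.symm)
    · simp only [Sum.inr.injEq, Subtype.mk.injEq] at heq
      exact hf _ ‹_› (heq ▸ hab)
    · exact hc _ _ (Eq.trans ‹_› (Eq.symm ‹_›))
    · simp only [Sum.inl.injEq, Subtype.mk.injEq] at heq
      exact hc _ _ heq
  have := (Coloring.mk col key : G.Coloring _).colorable
  simpa using this

/-- In a `K_ℓ`-critical graph, deleting a copy of `K_ℓ` leaves a `(k - ℓ)`-colorable graph. -/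
lemma IsKCritical.colorable_compl {V : Type*} {G : SimpleGraph V} {ℓ k : ℕ}
    (hG : IsKCritical G ℓ) (hk : G.chromaticNumber = (k : ℕ∞)) {L : Finset V}
    (hL : G.IsNClique ℓ L) :
    ∃ m, m + ℓ = k ∧ (G.induce ((↑L : Set V)ᶜ)).Colorable m := by
  have h := hG.2.2 L hL
  rw [hk] at h
  have hne : (G.induce ((↑L : Set V)ᶜ)).chromaticNumber ≠ ⊤ := by
    intro htop
    rw [htop, top_add] at h
    exact ENat.natCast_ne_top k h.symm
  obtain ⟨m, hm⟩ := ENat.ne_top_iff_exists.mp hne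
  refine ⟨m, ?_, chromaticNumber_le_iff_colorable.mp hm.ge⟩
  rw [← hm] at h
  exact_mod_cast h

/-- Some copy of `K_ℓ` through `y` misses `N(x)`; induction on the number `n` of vertices in which
the given copy meets `N(x)`. -/
lemma IsKCritical.exists_disjoint {V : Type*} {G : SimpleGraph V} {ℓ k : ℕ}
    (hG : IsKCritical G ℓ) (hk : G.chromaticNumber = (k : ℕ∞)) {x y : V}
    (hyx : y ≠ x) (hxy : ¬ G.Adj x y) (n : ℕ) :
    ∀ L : Finset V, G.IsNClique ℓ L → y ∈ L → ((↑L : Set V) ∩ G.neighborSet x).ncard = n →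
      ∃ L' : Finset V, G.IsNClique ℓ L' ∧ y ∈ L' ∧ ∀ v ∈ L', ¬ G.Adj x v := by
  classical
  induction n using Nat.strong_induction_on with
  | _ n ih =>
    intro L hL hy hn
    by_cases hdis : ∀ v ∈ L, ¬ G.Adj x v
    · exact ⟨L, hL, hy, hdis⟩
    push Not at hdis
    obtain ⟨w, hw, hxw⟩ := hdis
    have hxL : x ∉ L := fun hx => hxy (hL.1 hx hy hyx.symm)
    obtain ⟨m, hm, ⟨c⟩⟩ := hG.colorable_compl hk hL
    have hmpos : 0 < m := (c ⟨x, by simpa using hxL⟩).pos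
    obtain ⟨⟨z, hzL⟩, hcz, hz⟩ := exists_common_neighbor G L m c ⟨x, by simpa using hxL⟩ (by
      intro hcol
      have := hcol.chromaticNumber_le
      rw [hk, hL.2] at this
      have : k ≤ m - 1 + ℓ := by exact_mod_cast this
      omega)
    have hxz : ¬ G.Adj x z := fun h => c.valid (v := ⟨z, hzL⟩) (w := ⟨x, by simpa using hxL⟩)
      (by simpa using h.symm) hcz
    have hyw : y ≠ w := fun h => hxy (h ▸ hxw)
    have hL' : G.IsNClique ℓ (insert z (L.erase w)) := by
      refine ⟨?_, ?_⟩
      · rw [Finset.coe_insert, isClique_insert]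
        exact ⟨hL.1.subset (by simp), fun b hb _ => hz b (Finset.mem_of_mem_erase hb)⟩
      · rw [Finset.card_insert_of_notMem (fun h => hzL (Finset.mem_of_mem_erase h)),
          Finset.card_erase_add_one hw, hL.2]
    refine ih _ ?_ _ hL' (by simp [hyw, hy]) rfl
    rw [← hn]
    apply Set.ncard_lt_ncard _ (L.finite_toSet.inter_of_left _)
    refine ⟨?_, fun hsub => ?_⟩
    · rintro v ⟨hv, hxv⟩
      rcases Finset.mem_insert.mp hv with rfl | hv
      · exact absurd hxv hxz
      · exact ⟨Finset.mem_of_mem_erase hv, hxv⟩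
    · rcases Finset.mem_insert.mp (hsub ⟨hw, hxw⟩).1 with h | h
      · exact hxz (h ▸ hxw)
      · simp at h

theorem stmt10 {V : Type*} [Fintype V] (ℓ k : ℕ) (hℓ : 2 ≤ ℓ)
    (G : SimpleGraph V) (hG : IsKCritical G ℓ)
    (hk : G.chromaticNumber = (k : ℕ∞))
    (x : V) (L₀ : Finset V) (hL₀ : G.IsNClique ℓ L₀)
    (hnot : ¬ ((↑L₀ : Set V) ⊆ insert x (G.neighborSet x))) :
    (G.induce (G.neighborSet x)).chromaticNumber ≤ ((k - ℓ - 1 : ℕ) : ℕ∞) := by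
  classical
  obtain ⟨y, hy, hyN⟩ := Set.not_subset.mp hnot
  simp only [Set.mem_insert_iff, mem_neighborSet, not_or] at hyN
  obtain ⟨L, hL, hyL, hdis⟩ := hG.exists_disjoint hk hyN.1 hyN.2 _ L₀ hL₀ hy rfl
  have hxL : x ∉ L := fun hx => hyN.2 (hL.1 hx hyL (Ne.symm hyN.1))
  obtain ⟨m, hm, ⟨c⟩⟩ := hG.colorable_compl hk hL
  have hmem : ∀ v : G.neighborSet x, (v : V) ∈ ((↑L : Set V)ᶜ) := fun v hv => hdis v hv v.2
  have hxm : x ∈ ((↑L : Set V)ᶜ) := by simpa using hxL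
  let d : (G.induce (G.neighborSet x)).Coloring {i : Fin m // i ≠ c ⟨x, hxm⟩} :=
    Coloring.mk
      (fun v => ⟨c ⟨v, hmem v⟩, c.valid (by simpa using G.adj_symm v.2)⟩)
      (fun {a b} hab heq => c.valid (v := ⟨a, hmem a⟩) (w := ⟨b, hmem b⟩)
        (by simpa using hab) (congrArg Subtype.val heq))
  have hd := d.colorable.chromaticNumber_le
  have hcard : Fintype.card {i : Fin m // i ≠ c ⟨x, hxm⟩} = k - ℓ - 1 := by
    simp
    omega
  rwa [hcard] at hd
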